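/- Let m, n ≥ 1 and let x, a, b be real numbers. Let K be the 4mn×4mn complex matrix K = I_{2n} ⊗ T_{2m}(−a, x, a) + T_{2n}(−b, 0, b) ⊗ J_{2m}. Then det K = [ ∏_{j=1}^{m} ∏_{k=1}^{n} ( x² + 4a² cos²(jπ/(2m+1)) + 4b² cos²(kπ/(2n+1)) ) ]². -/

import Mathlib

open Matrix Kronecker Real Finset

/-- The `n × n` tridiagonal Toeplitz matrix with `c₀` on the diagonal, `c₁` on the
superdiagonal and `c₋₁` on the subdiagonal. -/
def triToeplitz (n : ℕ) (cm c0 cp : ℂ) : Matrix (Fin n) (Fin n) ℂ :=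
  Matrix.of fun j k =>
    if j = k then c0
    else if (j : ℕ) + 1 = (k : ℕ) then cp
    else if (k : ℕ) + 1 = (j : ℕ) then cm
    else 0

/-- The `m × m` antidiagonal matrix of ones. -/
def antiDiagOnes (m : ℕ) : Matrix (Fin m) (Fin m) ℂ :=
  Matrix.of fun j k => if (j : ℕ) + (k : ℕ) + 1 = m then 1 else 0

/-!
Let `S` be the skew adjacency matrix of a path. Diagonalising the vertical factor splits the
determinant into one factor `det (x + a • S + c • J)` for each eigenvalue `c` of `b • S`. On a path
with an even number of vertices these eigenvalues come in pairs `±c`. Because `J` is an involution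
anticommuting with `S`, conjugation by `J` turns `x + a • S - c • J` into `x - (a • S + c • J)`,
while `(a • S + c • J) ^ 2 = a ^ 2 • S ^ 2 + c ^ 2`. Hence the two factors of a pair multiply to
`det (x ^ 2 - c ^ 2 - a ^ 2 • S ^ 2)`, which is read off from the eigenvalues
`2 i cos (j π / (N + 1))` of `S`.
-/

section Semiconj

variable {ι κ R : Type*} [Fintype ι] [DecidableEq ι] [Fintype κ] [DecidableEq κ] [CommRing R]

lemma det_eq_det_of_semiconjBy {V A B : Matrix ι ι R} (hV : IsUnit V) (h : SemiconjBy V A B) :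
    A.det = B.det := by
  have hdet : V.det * A.det = V.det * B.det := by
    rw [← det_mul, h.eq, det_mul, mul_comm]
  exact (hV.map detMonoidHom).mul_left_cancel hdet

lemma det_smul_one_sub_smul_sq_of_semiconjBy_diagonal {V B : Matrix ι ι R} {μ : ι → R}
    (hV : IsUnit V) (h : SemiconjBy V (diagonal μ) B) (s t : R) :
    (s • 1 - t • B ^ 2).det = ∏ i, (s - t * μ i ^ 2) := by
  have hconj : SemiconjBy V (s • 1 - t • diagonal μ ^ 2) (s • 1 - t • B ^ 2) :=
    ((SemiconjBy.one_right V).smul_right s).sub_right ((h.pow_right 2).smul_right t)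
  have hdiag : s • 1 - t • diagonal μ ^ 2 = diagonal fun i => s - t * μ i ^ 2 := by
    rw [diagonal_pow, smul_one_eq_diagonal, ← diagonal_smul, diagonal_sub]
    rfl
  rw [← det_eq_det_of_semiconjBy hV hconj, hdiag, det_diagonal]

lemma det_one_kronecker_add_diagonal_kronecker (A C : Matrix κ κ R) (μ : ι → R) :
    (1 ⊗ₖ A + diagonal μ ⊗ₖ C).det = ∏ i, (A + μ i • C).det := by
  have hblock : 1 ⊗ₖ A + diagonal μ ⊗ₖ C =
      reindex (Equiv.prodComm κ ι) (Equiv.prodComm κ ι) (blockDiagonal fun i => A + μ i • C) := by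
    ext ⟨i, k⟩ ⟨j, l⟩
    by_cases hij : i = j <;> simp [hij, blockDiagonal_apply]
  rw [hblock, det_reindex_self, det_blockDiagonal]

lemma det_one_kronecker_add_kronecker_of_semiconjBy_diagonal {V B : Matrix ι ι R} {μ : ι → R}
    (hV : IsUnit V) (h : SemiconjBy V (diagonal μ) B) (A C : Matrix κ κ R) :
    (1 ⊗ₖ A + B ⊗ₖ C).det = ∏ i, (A + μ i • C).det := by
  have hunit : IsUnit (V ⊗ₖ (1 : Matrix κ κ R)) := hV.kronecker isUnit_one
  have hconj : SemiconjBy (V ⊗ₖ (1 : Matrix κ κ R))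
      (1 ⊗ₖ A + diagonal μ ⊗ₖ C) (1 ⊗ₖ A + B ⊗ₖ C) := by
    refine SemiconjBy.add_right ?_ ?_
    · simp only [SemiconjBy, ← mul_kronecker_mul, mul_one, one_mul]
    · simp only [SemiconjBy, ← mul_kronecker_mul, mul_one, one_mul, h.eq]
  rw [← det_eq_det_of_semiconjBy hunit hconj, det_one_kronecker_add_diagonal_kronecker]

lemma det_add_smul_mul_det_sub_smul_of_semiconjBy_neg {A J : Matrix ι ι R} (hJ : J * J = 1)
    (hA : SemiconjBy J A (-A)) (x c : R) :
    (x • 1 + A + c • J).det * (x • 1 + A - c • J).det = ((x ^ 2 - c ^ 2) • 1 - A ^ 2).det := by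
  have hconj : SemiconjBy J (x • 1 + A - c • J) (x • 1 + -A - c • J) :=
    (((SemiconjBy.one_right J).smul_right x).add_right hA).sub_right ((Commute.refl J).smul_right c)
  have hsq : (A + c • J) ^ 2 = A ^ 2 + c ^ 2 • 1 := by
    have hanti : J * A = -(A * J) := by rw [hA.eq, neg_mul]
    simp only [pow_two, add_mul, mul_add, smul_mul_assoc, mul_smul_comm, hanti, hJ, smul_add,
      smul_neg, smul_smul]
    abel
  have hprod : (x • 1 + A + c • J) * (x • 1 + -A - c • J) = (x ^ 2 - c ^ 2) • 1 - A ^ 2 := by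
    have hcomm : Commute (x • 1) (A + c • J) := (Commute.one_left _).smul_left x
    rw [add_assoc, add_sub_assoc, ← neg_add', ← sub_eq_add_neg, ← hcomm.sq_sub_sq, hsq, smul_pow,
      one_pow, sub_smul]
    abel
  rw [det_eq_det_of_semiconjBy (IsUnit.of_mul_eq_one J hJ) hconj, ← det_mul, hprod]

end Semiconj

lemma exists_isUnit_semiconjBy_diagonal {ι K : Type*} [Fintype ι] [DecidableEq ι] [Field K]
    {B : Matrix ι ι K} {μ : ι → K} (hμ : Function.Injective μ)
    (h : ∀ i, Module.End.HasEigenvalue B.toLin' (μ i)) :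
    ∃ V : Matrix ι ι K, IsUnit V ∧ SemiconjBy V (diagonal μ) B := by
  choose v hv using fun i => (h i).exists_hasEigenvector
  refine ⟨(of v)ᵀ, linearIndependent_cols_iff_isUnit.1 ?_, ?_⟩
  · exact Module.End.eigenvectors_linearIndependent' B.toLin' μ hμ v hv
  · ext i j
    have hmul : (B *ᵥ v j) i = μ j * v j i := congrFun (hv j).apply_eq_smul i
    rw [mul_diagonal, transpose_apply, of_apply, mul_comm, ← hmul]
    rfl

lemma triToeplitz_mulVec (N : ℕ) (cm c0 cp : ℂ) {u : ℕ → ℂ} (h0 : u 0 = 0) (hN : u (N + 1) = 0)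
    (i : Fin N) :
    (triToeplitz N cm c0 cp *ᵥ fun k => u (k + 1)) i =
      cm * u i + c0 * u (i + 1) + cp * u (i + 2) := by
  -- `f l` collects the term of `u l`; the boundary zeros let `l` run over all of `0, …, N + 1`.
  let f : ℕ → ℂ := fun l =>
    (if l = i then cm * u i else 0) + (if l = i + 1 then c0 * u (i + 1) else 0) +
      (if l = i + 2 then cp * u (i + 2) else 0)
  have hf0 : f 0 = 0 := by grind
  have hfN : f (N + 1) = 0 := by grind
  calc (triToeplitz N cm c0 cp *ᵥ fun k => u (k + 1)) i
      = ∑ k : Fin N, f (k + 1) := by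
        simp only [mulVec, dotProduct]
        refine sum_congr rfl fun k _ => ?_
        simp only [triToeplitz, of_apply, Fin.ext_iff]
        grind
    _ = ∑ l ∈ range (N + 2), f l := by
        rw [Fin.sum_univ_eq_sum_range fun k => f (k + 1), sum_range_succ, sum_range_succ', hf0, hfN,
          add_zero, add_zero]
    _ = cm * u i + c0 * u (i + 1) + cp * u (i + 2) := by
        have hi := i.isLt
        simp only [f, sum_add_distrib, sum_ite_eq', mem_range]
        rw [if_pos (by omega), if_pos (by omega), if_pos (by omega)]

/-- The signed adjacency matrix of the path on `N` vertices, each edge oriented towards the larger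
vertex. -/
def pathMatrix (N : ℕ) : Matrix (Fin N) (Fin N) ℂ := triToeplitz N (-1) 0 1

lemma triToeplitz_neg_eq_smul_one_add_smul_pathMatrix (N : ℕ) (x a : ℂ) :
    triToeplitz N (-a) x a = x • 1 + a • pathMatrix N := by
  ext i j
  simp only [pathMatrix, triToeplitz, of_apply, Matrix.add_apply, Matrix.smul_apply,
    Matrix.one_apply, smul_eq_mul]
  split_ifs <;> simp

/-- The angle `j π / (N + 1)` attached to the `j`-th eigenvalue of `pathMatrix N`, with `j` running
from `1` to `N`. -/
noncomputable def pathAngle (N j : ℕ) : ℝ := j * π / (N + 1)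

/-- The `j`-th eigenvalue of `pathMatrix N`, with `j` running from `1` to `N`. -/
noncomputable def pathEigenvalue (N j : ℕ) : ℂ := 2 * Complex.I * Real.cos (pathAngle N j)

lemma pathAngle_mem_Ioo {N j : ℕ} (hj : 0 < j) (hjN : j ≤ N) : pathAngle N j ∈ Set.Ioo 0 π := by
  have hlt : (j : ℝ) < N + 1 := by exact_mod_cast Nat.lt_succ_of_le hjN
  refine ⟨by unfold pathAngle; positivity, ?_⟩
  rw [pathAngle, div_lt_iff₀ (by positivity), mul_comm]
  gcongr

lemma pathAngle_injective (N : ℕ) : Function.Injective (pathAngle N) := by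
  intro i j hij
  have hN : (N : ℝ) + 1 ≠ 0 := by positivity
  simpa [pathAngle, div_left_inj' hN, pi_ne_zero] using hij

lemma pathAngle_reflect {N j : ℕ} (hj : j ≤ N + 1) :
    pathAngle N (N + 1 - j) = π - pathAngle N j := by
  have hN : (N : ℝ) + 1 ≠ 0 := by positivity
  rw [pathAngle, pathAngle, Nat.cast_sub hj]
  push_cast
  field_simp

lemma pathEigenvalue_reflect {N j : ℕ} (hj : j ≤ N + 1) :
    pathEigenvalue N (N + 1 - j) = -pathEigenvalue N j := by
  rw [pathEigenvalue, pathAngle_reflect hj, Real.cos_pi_sub, Complex.ofReal_neg, mul_neg,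
    pathEigenvalue]

lemma pathEigenvalue_injOn (N : ℕ) : Set.InjOn (pathEigenvalue N) (Set.Icc 1 N) := by
  intro i hi j hj hij
  have hcos : Real.cos (pathAngle N i) = Real.cos (pathAngle N j) := by
    simpa [pathEigenvalue, -Complex.ofReal_cos] using hij
  exact pathAngle_injective N <| Real.injOn_cos
    (Set.Ioo_subset_Icc_self <| pathAngle_mem_Ioo hi.1 hi.2)
    (Set.Ioo_subset_Icc_self <| pathAngle_mem_Ioo hj.1 hj.2) hcos

lemma I_pow_mul_sin_recurrence (θ : ℝ) (k : ℕ) :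
    Complex.I ^ (k + 2) * Real.sin ((k + 2 : ℕ) * θ) - Complex.I ^ k * Real.sin (k * θ) =
      2 * Complex.I * Real.cos θ * (Complex.I ^ (k + 1) * Real.sin ((k + 1 : ℕ) * θ)) := by
  have hsin : (Real.sin (k * θ) : ℂ) + Real.sin ((k + 2 : ℕ) * θ) =
      2 * Real.sin ((k + 1 : ℕ) * θ) * Real.cos θ := by
    have hprod := Real.two_mul_sin_mul_cos ((k + 1 : ℕ) * θ) θ
    rw [show ((k + 1 : ℕ) : ℝ) * θ - θ = k * θ by push_cast; ring,
      show ((k + 1 : ℕ) : ℝ) * θ + θ = (k + 2 : ℕ) * θ by push_cast; ring] at hprod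
    exact_mod_cast hprod.symm
  simp only [pow_succ]
  linear_combination Complex.I ^ k * Complex.I ^ 2 * hsin -
    Complex.I ^ k * Real.sin (k * θ) * Complex.I_sq

lemma hasEigenvalue_pathMatrix {N j : ℕ} (hj : 0 < j) (hjN : j ≤ N) :
    Module.End.HasEigenvalue (pathMatrix N).toLin' (pathEigenvalue N j) := by
  set θ := pathAngle N j with hθ
  let u : ℕ → ℂ := fun k => Complex.I ^ k * Real.sin (k * θ)
  have hu0 : u 0 = 0 := by simp [u]
  have huN : u (N + 1) = 0 := by
    have hangle : ((N + 1 : ℕ) : ℝ) * θ = j * π := by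
      rw [hθ, pathAngle]
      push_cast
      field_simp
    simp only [u, hangle, Real.sin_nat_mul_pi, Complex.ofReal_zero, mul_zero]
  have hu1 : u 1 ≠ 0 := by
    have hsin := Real.sin_pos_of_mem_Ioo (pathAngle_mem_Ioo hj hjN)
    simpa [u, ← Complex.ofReal_sin] using hsin.ne'
  refine Module.End.hasEigenvalue_of_hasEigenvector (x := fun k : Fin N => u (k + 1))
    ⟨Module.End.mem_eigenspace_iff.2 ?_, fun hzero => ?_⟩
  · ext i
    rw [toLin'_apply, pathMatrix, triToeplitz_mulVec N (-1) 0 1 hu0 huN, Pi.smul_apply,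
      smul_eq_mul, pathEigenvalue, ← hθ, ← I_pow_mul_sin_recurrence]
    ring
  · exact hu1 (congrFun hzero ⟨0, hj.trans_le hjN⟩)

lemma exists_isUnit_semiconjBy_diagonal_pathMatrix (N : ℕ) :
    ∃ V : Matrix (Fin N) (Fin N) ℂ, IsUnit V ∧
      SemiconjBy V (diagonal fun j => pathEigenvalue N (j + 1)) (pathMatrix N) := by
  refine exists_isUnit_semiconjBy_diagonal (fun i j hij => ?_)
    fun j => hasEigenvalue_pathMatrix j.1.succ_pos j.2
  exact Fin.ext <| Nat.succ_injective <| pathEigenvalue_injOn N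
    ⟨Nat.le_add_left 1 i, i.2⟩ ⟨Nat.le_add_left 1 j, j.2⟩ hij

lemma antiDiagOnes_eq_permMatrix (N : ℕ) : antiDiagOnes N = Fin.revPerm.permMatrix ℂ := by
  ext i j
  simp only [antiDiagOnes, of_apply, Equiv.Perm.permMatrix, PEquiv.toMatrix_apply,
    Equiv.toPEquiv_apply, Option.mem_some_iff, Fin.revPerm_apply, Fin.ext_iff, Fin.val_rev]
  congr 1
  grind

lemma antiDiagOnes_mul_self (N : ℕ) : antiDiagOnes N * antiDiagOnes N = 1 := by
  have hrev : (Fin.revPerm : Equiv.Perm (Fin N)) * Fin.revPerm = 1 := by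
    ext i
    simp
  rw [antiDiagOnes_eq_permMatrix, ← permMatrix_mul, hrev, permMatrix_one]

lemma semiconjBy_antiDiagOnes_pathMatrix (N : ℕ) :
    SemiconjBy (antiDiagOnes N) (pathMatrix N) (-pathMatrix N) := by
  ext i j
  rw [antiDiagOnes_eq_permMatrix, Equiv.Perm.permMatrix, PEquiv.toMatrix_toPEquiv_mul,
    PEquiv.mul_toMatrix_toPEquiv]
  simp only [pathMatrix, triToeplitz, submatrix_apply, Matrix.neg_apply, of_apply, id, Fin.ext_iff,
    Fin.revPerm_symm, Fin.revPerm_apply, Fin.val_rev]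
  grind

lemma prod_fin_two_mul_eq_prod_Icc_mul_reflect {M : Type*} [CommMonoid M] (n : ℕ) (f : ℕ → M) :
    ∏ i : Fin (2 * n), f (i + 1) = ∏ j ∈ Icc 1 n, f j * f (2 * n + 1 - j) := by
  have hreflect : ∏ j ∈ range n, f (n + j + 1) = ∏ j ∈ range n, f (2 * n + 1 - (j + 1)) := by
    rw [← prod_range_reflect]
    refine prod_congr rfl fun j hj => ?_
    congr 1
    have := mem_range.1 hj
    omega
  rw [Fin.prod_univ_eq_prod_range fun i => f (i + 1), two_mul, prod_range_add, ← two_mul, hreflect,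
    ← prod_mul_distrib, ← Ico_add_one_right_eq_Icc, prod_Ico_eq_prod_range, Nat.add_sub_cancel]
  simp only [add_comm 1]

lemma det_smul_pathMatrix_add_mul_det_sub (N : ℕ) (x a c : ℂ) :
    (x • 1 + a • pathMatrix N + c • antiDiagOnes N).det *
        (x • 1 + a • pathMatrix N - c • antiDiagOnes N).det =
      ∏ j : Fin N, (x ^ 2 - c ^ 2 - a ^ 2 * pathEigenvalue N (j + 1) ^ 2) := by
  obtain ⟨V, hV, hdiag⟩ := exists_isUnit_semiconjBy_diagonal_pathMatrix N
  have hanti : SemiconjBy (antiDiagOnes N) (a • pathMatrix N) (-(a • pathMatrix N)) := by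
    simpa only [smul_neg] using (semiconjBy_antiDiagOnes_pathMatrix N).smul_right a
  rw [det_add_smul_mul_det_sub_smul_of_semiconjBy_neg (antiDiagOnes_mul_self N) hanti, smul_pow,
    det_smul_one_sub_smul_sq_of_semiconjBy_diagonal hV hdiag]

/-- The signed adjacency matrix `K` of the grid with `N` columns and `M` rows, with vertex weight
`x`, horizontal edge weight `a` and vertical edge weight `b`. The vertices are indexed by
(row, position along the snake), which makes the vertical edges antidiagonal. -/
def gridMatrix (N M : ℕ) (x a b : ℂ) : Matrix (Fin M × Fin N) (Fin M × Fin N) ℂ :=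
  1 ⊗ₖ triToeplitz N (-a) x a + triToeplitz M (-b) 0 b ⊗ₖ antiDiagOnes N

lemma gridMatrix_eq_one_kronecker_add_pathMatrix_kronecker (N M : ℕ) (x a b : ℂ) :
    gridMatrix N M x a b =
      1 ⊗ₖ (x • 1 + a • pathMatrix N) + pathMatrix M ⊗ₖ (b • antiDiagOnes N) := by
  rw [gridMatrix, triToeplitz_neg_eq_smul_one_add_smul_pathMatrix,
    triToeplitz_neg_eq_smul_one_add_smul_pathMatrix, zero_smul, zero_add, smul_kronecker,
    kronecker_smul]

lemma det_gridMatrix_two_mul_rows (N n : ℕ) (x a b : ℂ) :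
    (gridMatrix N (2 * n) x a b).det =
      ∏ k ∈ Icc 1 n, ∏ j : Fin N,
        (x ^ 2 - (b * pathEigenvalue (2 * n) k) ^ 2 - a ^ 2 * pathEigenvalue N (j + 1) ^ 2) := by
  obtain ⟨V, hV, hdiag⟩ := exists_isUnit_semiconjBy_diagonal_pathMatrix (2 * n)
  let F : ℂ → ℂ := fun c => (x • 1 + a • pathMatrix N + c • antiDiagOnes N).det
  calc _ = ∏ k : Fin (2 * n), F (b * pathEigenvalue (2 * n) (k + 1)) := by
        rw [gridMatrix_eq_one_kronecker_add_pathMatrix_kronecker,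
          det_one_kronecker_add_kronecker_of_semiconjBy_diagonal hV hdiag]
        simp only [F, smul_smul, mul_comm b]
    _ = ∏ k ∈ Icc 1 n, F (b * pathEigenvalue (2 * n) k) * F (-(b * pathEigenvalue (2 * n) k)) := by
        rw [prod_fin_two_mul_eq_prod_Icc_mul_reflect n fun k => F (b * pathEigenvalue (2 * n) k)]
        refine prod_congr rfl fun k hk => ?_
        rw [pathEigenvalue_reflect (by grind), mul_neg]
    _ = _ := by
        refine prod_congr rfl fun k _ => ?_
        simp only [F]
        rw [neg_smul, ← sub_eq_add_neg, det_smul_pathMatrix_add_mul_det_sub]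

lemma prod_fin_two_mul_pathEigenvalue_sq {M : Type*} [CommMonoid M] (m : ℕ) (g : ℂ → M) :
    ∏ j : Fin (2 * m), g (pathEigenvalue (2 * m) (j + 1) ^ 2) =
      (∏ j ∈ Icc 1 m, g (pathEigenvalue (2 * m) j ^ 2)) ^ 2 := by
  rw [prod_fin_two_mul_eq_prod_Icc_mul_reflect m fun j => g (pathEigenvalue (2 * m) j ^ 2),
    ← prod_pow]
  refine prod_congr rfl fun j hj => ?_
  rw [pathEigenvalue_reflect (by grind), neg_sq, ← pow_two]

lemma pathEigenvalue_two_mul_sq (m j : ℕ) :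
    pathEigenvalue (2 * m) j ^ 2 = -(4 * Real.cos (j * π / (2 * m + 1)) ^ 2) := by
  rw [pathEigenvalue, pathAngle, mul_pow, mul_pow, Complex.I_sq]
  push_cast
  ring

theorem grid_partition_function_general (m n : ℕ) (x a b : ℂ) :
    ((1 : Matrix (Fin (2 * n)) (Fin (2 * n)) ℂ) ⊗ₖ triToeplitz (2 * m) (-a) x a +
        triToeplitz (2 * n) (-b) 0 b ⊗ₖ antiDiagOnes (2 * m)).det =
      (∏ j ∈ Icc 1 m, ∏ k ∈ Icc 1 n,
        (x ^ 2 + 4 * a ^ 2 * Real.cos (j * π / (2 * m + 1)) ^ 2 +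
          4 * b ^ 2 * Real.cos (k * π / (2 * n + 1)) ^ 2)) ^ 2 := by
  rw [← gridMatrix, det_gridMatrix_two_mul_rows, prod_comm (s := Icc 1 m), ← prod_pow]
  refine prod_congr rfl fun k _ => ?_
  rw [prod_fin_two_mul_pathEigenvalue_sq m fun z =>
    x ^ 2 - (b * pathEigenvalue (2 * n) k) ^ 2 - a ^ 2 * z]
  congr 1
  refine prod_congr rfl fun j _ => ?_
  rw [mul_pow, pathEigenvalue_two_mul_sq, pathEigenvalue_two_mul_sq]
  ring

theorem grid_partition_function (m n : ℕ) (hm : 1 ≤ m) (hn : 1 ≤ n) (x a b : ℝ) :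
    ((1 : Matrix (Fin (2 * n)) (Fin (2 * n)) ℂ) ⊗ₖ triToeplitz (2 * m) (-(a:ℂ)) (x:ℂ) (a:ℂ)
      + triToeplitz (2 * n) (-(b:ℂ)) 0 (b:ℂ) ⊗ₖ antiDiagOnes (2 * m)).det
    = (((∏ j ∈ Finset.Icc 1 m, ∏ k ∈ Finset.Icc 1 n,
          (x ^ 2 + 4 * a ^ 2 * Real.cos ((j : ℝ) * Real.pi / (2 * (m : ℝ) + 1)) ^ 2
            + 4 * b ^ 2 * Real.cos ((k : ℝ) * Real.pi / (2 * (n : ℝ) + 1)) ^ 2)) ^ 2 : ℝ) : ℂ) := by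
  exact_mod_cast grid_partition_function_general m n x a b
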